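/- Conditional entropy of the z-register given the w-register: fix a matrix M ∈ F_2^{q×m}. Let X be a random variable on F_2^m, let R be uniform on F_2^{mq} and S uniform on F_2^{q(m−1)}, with X, R, S mutually independent, and write (W, Z) = RE_M(X; R, S). Then for every w ∈ F_2^{mq}, the conditional Shannon entropy of Z given the event W = w satisfies H(Z | W = w) = q(m−1) + H(MX). -/

import Mathlib

/-!
Taking prefix sums of `w` recovers the vertical mask: `r_{j,i} = x_j + a_{j,i}(w)`. Hence, for each
input `x`, `W` is uniform, and given `W = w` the register `Z` is the matrix
`M_{i,j} (X_j + a_{j,i}(w))` shifted by a uniform element of the image of the horizontal mask. By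
telescoping, this image is the subgroup of matrices with vanishing row sums, and the mask is
injective, so the image has order `2 ^ (q (m - 1))`. Adding a uniform element of a subgroup hides
everything except the coset: the entropy becomes the logarithm of the order of the subgroup plus the
entropy of the row sums, which are a translate of `M X`.
-/

open Finset

/-- Boundary-extended horizontal mask: `sBext m s i k` is the 1-based `s_{i,k}`
for `k ∈ {1,…,m-1}`, with the boundary convention `s_{i,0} = s_{i,m} = 0`. -/
def sBext (m : ℕ) {q : ℕ} (s : Fin q → Fin (m - 1) → ZMod 2) (i : Fin q) (k : ℕ) :
    ZMod 2 :=
  if h : 1 ≤ k ∧ k ≤ m - 1 then s i ⟨k - 1, by omega⟩ else 0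

/-- `REw x r j i` is the output bit `w_{j+1,i}` (1-based column `j+1`, `w`-index
`i ∈ {0,…,q-1}`): `w_{j,0} = x_j ⊕ r_{j,1}` and `w_{j,i} = r_{j,i} ⊕ r_{j,i+1}`;
here `r j i` denotes `r_{j+1,i+1}` in the 1-based notation. -/
def REw {m q : ℕ} (x : Fin m → ZMod 2) (r : Fin m → Fin q → ZMod 2) :
    Fin m → Fin q → ZMod 2 :=
  fun j i =>
    (if (i : ℕ) = 0 then x j
      else r j ⟨(i : ℕ) - 1, Nat.lt_of_le_of_lt (Nat.sub_le _ _) i.isLt⟩) + r j i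

/-- `REz M r s i j` is the output bit `z_{i+1,j+1}` (1-based):
`z_{i,j} = s_{i,j-1} ⊕ s_{i,j} ⊕ M_{i,j}·r_{j,i}`. -/
def REz {m q : ℕ} (M : Fin q → Fin m → ZMod 2) (r : Fin m → Fin q → ZMod 2)
    (s : Fin q → Fin (m - 1) → ZMod 2) : Fin q → Fin m → ZMod 2 :=
  fun i j => sBext m s i (j : ℕ) + sBext m s i ((j : ℕ) + 1) + M i j * r j i

/-- `aFun w j i = w_{j,0} ⊕ ⋯ ⊕ w_{j,i}` (0-based `i : Fin q`), i.e. the prefix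
parity `a_{j,i+1}` in the 1-based notation of the paper. -/
def aFun {m q : ℕ} (w : Fin m → Fin q → ZMod 2) (j : Fin m) (i : Fin q) : ZMod 2 :=
  ∑ k ∈ Finset.Iic i, w j k

open scoped ENNReal

/-- The product of two probability mass functions (joint distribution of a pair
of independent random variables). -/
noncomputable def pmfProd {α β : Type*} (p : PMF α) (p' : PMF β) : PMF (α × β) :=
  p.bind fun a => p'.map fun b => (a, b)

/-- Shannon entropy in bits of a probability mass function on a finite type,
with the convention `0·log₂ 0 = 0`. -/
noncomputable def shannonEntropy {α : Type*} [Fintype α] (p : PMF α) : ℝ :=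
  -∑ a, ((p a).toReal * Real.logb 2 (p a).toReal)

/-- Shannon entropy in bits of a probability mass function given as a real
valued function on a finite type. -/
noncomputable def shannonEntropyFun {α : Type*} [Fintype α] (p : α → ℝ) : ℝ :=
  -∑ a, (p a * Real.logb 2 (p a))

section Entropy

variable {α β : Type*} [Fintype α] [Fintype β]

lemma shannonEntropyFun_comp_div [DecidableEq β] (f : α → β) (p : β → ℝ) {N : ℕ} (hN : N ≠ 0)
    (hf : ∀ b, p b ≠ 0 → #{a | f a = b} = N) :
    shannonEntropyFun (fun a => p (f a) / N) =
      (∑ b, p b) * Real.logb 2 N + shannonEntropyFun p := by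
  have hterm (b : β) : ∑ a with f a = b, p b / N * Real.logb 2 (p b / N) =
      p b * Real.logb 2 (p b) - p b * Real.logb 2 N := by
    by_cases hb : p b = 0
    · simp [hb]
    · have hN' : (N : ℝ) ≠ 0 := Nat.cast_ne_zero.2 hN
      rw [sum_const, hf b hb, nsmul_eq_mul, Real.logb_div hb hN']
      field_simp
  rw [shannonEntropyFun, ← sum_fiberwise' univ f fun b => p b / N * Real.logb 2 (p b / N),
    sum_congr rfl fun b _ => hterm b, sum_sub_distrib, ← sum_mul, shannonEntropyFun]
  ring

lemma sum_toReal_pmf (p : PMF α) : ∑ a, (p a).toReal = 1 := by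
  rw [← ENNReal.toReal_sum fun a _ => p.apply_ne_top a, ← tsum_fintype (L := .unconditional _),
    p.tsum_coe, ENNReal.toReal_one]

end Entropy

lemma logb_card_matrix_zmod_two (k n : ℕ) :
    Real.logb 2 (Fintype.card (Fin k → Fin n → ZMod 2)) = (k * n : ℕ) := by
  have hcard : Fintype.card (Fin k → Fin n → ZMod 2) = 2 ^ (k * n) := by
    simp [ZMod.card, ← pow_mul, mul_comm]
  rw [hcard, Nat.cast_pow, Nat.cast_ofNat, Real.logb_pow, Real.logb_self_eq_one one_lt_two,
    mul_one]

section PMF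

variable {α β γ : Type*}

lemma map_pmfProd (p : PMF α) (p' : PMF β) (f : α × β → γ) :
    (pmfProd p p').map f = p.bind fun a => p'.map fun b => f (a, b) := by
  simp only [pmfProd, PMF.map_bind, PMF.map_comp, Function.comp_def]

lemma map_apply_of_injective {f : α → β} (hf : f.Injective) (p : PMF α) (a : α) :
    p.map f (f a) = p a := by
  classical
  simp only [PMF.map_apply, hf.eq_iff, tsum_ite_eq']

lemma map_apply_of_notMem_range {f : α → β} {b : β} (hb : b ∉ Set.range f) (p : PMF α) :
    p.map f b = 0 := by
  rw [PMF.apply_eq_zero_iff, PMF.mem_support_map_iff]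
  rintro ⟨a, -, rfl⟩
  exact hb ⟨a, rfl⟩

lemma map_uniformOfFintype_of_bijective [Fintype α] [Nonempty α] [Fintype β] [Nonempty β]
    {f : α → β} (hf : f.Bijective) :
    (PMF.uniformOfFintype α).map f = PMF.uniformOfFintype β := by
  ext b
  obtain ⟨a, rfl⟩ := hf.surjective b
  simp only [map_apply_of_injective hf.injective, PMF.uniformOfFintype_apply,
    Fintype.card_of_bijective hf]

lemma bind_map_prodMk_apply (p : PMF α) (κ : α → PMF β) (a : α) (b : β) :
    (p.bind fun a => (κ a).map (Prod.mk a)) (a, b) = p a * κ a b := by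
  rw [PMF.bind_apply, tsum_eq_single a, map_apply_of_injective (Prod.mk_right_injective a)]
  intro a' ha'
  rw [map_apply_of_notMem_range, mul_zero]
  rintro ⟨b', h⟩
  exact ha' (congrArg Prod.fst h)

lemma bind_map_prodMk_div_sum [Fintype β] (p : PMF α) (κ : α → PMF β) {a : α} (ha : p a ≠ 0)
    (b : β) :
    (p.bind fun a => (κ a).map (Prod.mk a)) (a, b) /
      ∑ b', (p.bind fun a => (κ a).map (Prod.mk a)) (a, b') = κ a b := by
  simp only [bind_map_prodMk_apply]
  rw [← mul_sum, ← tsum_fintype (L := .unconditional _), (κ a).tsum_coe,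
    ENNReal.mul_div_mul_left _ _ ha (p.apply_ne_top a), div_one]

lemma shannonEntropyFun_map_comp_div [Fintype α] [Fintype β] [DecidableEq β] {f : α → β} {N : ℕ}
    (hf : ∀ a, #{a' | f a' = f a} = N) (p : PMF α) :
    shannonEntropyFun (fun a => (p.map f (f a)).toReal / N) =
      Real.logb 2 N + shannonEntropy (p.map f) := by
  have hN : N ≠ 0 := by
    obtain ⟨a, -⟩ := p.support_nonempty
    rw [← hf a]
    exact card_ne_zero_of_mem (mem_filter.2 ⟨mem_univ a, rfl⟩)
  have hfiber (b : β) (hb : (p.map f b).toReal ≠ 0) : #{a | f a = b} = N := by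
    obtain ⟨a, rfl⟩ : b ∈ Set.range f := by
      by_contra h
      exact hb (by rw [map_apply_of_notMem_range h, ENNReal.toReal_zero])
    exact hf a
  rw [shannonEntropyFun_comp_div f (fun b => (p.map f b).toReal) hN hfiber, sum_toReal_pmf, one_mul]
  rfl

lemma shannonEntropy_map_of_injective [Fintype α] [Fintype β] {f : α → β} (hf : f.Injective)
    (p : PMF α) : shannonEntropy (p.map f) = shannonEntropy p := by
  classical
  have hfiber (a : α) : #{a' | f a' = f a} = 1 :=
    card_eq_one.2 ⟨a, by ext; simp [hf.eq_iff]⟩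
  have h := shannonEntropyFun_map_comp_div (f := f) hfiber p
  simp only [map_apply_of_injective hf, Nat.cast_one, div_one, Real.logb_one, zero_add] at h
  exact h.symm

end PMF

section UniformMask

/-- The law of `D k + g` for `g` drawn from `p` and an independent, uniformly random mask
`k : K`. -/
noncomputable def uniformMask {K G : Type*} [Fintype K] [Nonempty K] [Add G] (D : K → G)
    (p : PMF G) : PMF G :=
  p.bind fun g => (PMF.uniformOfFintype K).map fun k => D k + g

variable {K G H : Type*} [Fintype K] [AddGroup G] [AddGroup H]

lemma card_fiber_of_exact [Fintype G] [DecidableEq H] {D : K → G} {σ : G →+ H}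
    (hD : D.Injective) (hex : Function.Exact D σ) (g : G) :
    #{g' | σ g' = σ g} = Fintype.card K := by
  classical
  have hinj : (fun k => D k + g).Injective := (add_left_injective g).comp hD
  have himage : ({g' | σ g' = σ g} : Finset G) = univ.image fun k => D k + g := by
    ext g'
    simp [← sub_eq_zero (a := σ g'), ← map_sub, hex (g' - g), eq_sub_iff_add_eq]
  rw [himage, card_image_of_injective _ hinj, card_univ]

variable [Nonempty K]

lemma uniformMask_apply {D : K → G} {σ : G →+ H} (hD : D.Injective) (hex : Function.Exact D σ)
    (p : PMF G) (g : G) : uniformMask D p g = p.map σ (σ g) / Fintype.card K := by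
  classical
  have hshift (g₀ : G) : (PMF.uniformOfFintype K).map (fun k => D k + g₀) g =
      if σ g = σ g₀ then (Fintype.card K : ℝ≥0∞)⁻¹ else 0 := by
    split_ifs with h
    · obtain ⟨k, hk⟩ := (hex (g - g₀)).1 (by rw [map_sub, h, sub_self])
      obtain rfl : D k + g₀ = g := by rw [hk, sub_add_cancel]
      have hinj : (fun k => D k + g₀).Injective := (add_left_injective g₀).comp hD
      rw [map_apply_of_injective hinj, PMF.uniformOfFintype_apply]
    · refine map_apply_of_notMem_range ?_ _
      rintro ⟨k, rfl⟩
      simp [hex.apply_apply_eq_zero k] at h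
  simp only [uniformMask, PMF.bind_apply, hshift, PMF.map_apply, div_eq_mul_inv,
    ← ENNReal.tsum_mul_right, mul_ite, ite_mul, mul_zero, zero_mul]

lemma shannonEntropy_uniformMask [Fintype G] [Fintype H] {D : K → G} {σ : G →+ H}
    (hD : D.Injective) (hex : Function.Exact D σ) (p : PMF G) :
    shannonEntropy (uniformMask D p) =
      Real.logb 2 (Fintype.card K) + shannonEntropy (p.map σ) := by
  classical
  simpa only [shannonEntropy, shannonEntropyFun, uniformMask_apply hD hex, ENNReal.toReal_div,
    ENNReal.toReal_natCast] using shannonEntropyFun_map_comp_div (card_fiber_of_exact hD hex) p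

end UniformMask

section Telescoping

lemma partialSum_last {A : Type*} [AddCommMonoid A] {n : ℕ} (f : Fin n → A) :
    Fin.partialSum f (Fin.last n) = ∑ k, f k := by
  simp [Fin.partialSum, List.take_of_length_le, List.sum_ofFn]

variable {R : Type*} [Ring R] [CharP R 2] {n : ℕ}

lemma sum_Iic_castSucc_add_succ (u : Fin (n + 1) → R) (i : Fin n) :
    ∑ k ∈ Iic i, (u k.castSucc + u k.succ) = u 0 + u i.succ := by
  simpa only [CharTwo.sub_eq_add, add_comm] using Fin.sum_Iic_sub i u

lemma sum_castSucc_add_succ (u : Fin (n + 1) → R) :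
    ∑ k : Fin n, (u k.castSucc + u k.succ) = u 0 + u (Fin.last n) := by
  cases n with
  | zero => simp [CharTwo.add_self_eq_zero]
  | succ n => simpa [← Fin.top_eq_last] using sum_Iic_castSucc_add_succ u (Fin.last n)

end Telescoping

section VerticalMask

variable {m q : ℕ}

lemma REw_eq_cons_add_cons (x : Fin m → ZMod 2) (r : Fin m → Fin q → ZMod 2) (j : Fin m)
    (i : Fin q) :
    REw x r j i =
      Fin.cons (α := fun _ => ZMod 2) (x j) (r j) i.castSucc +
        Fin.cons (α := fun _ => ZMod 2) (x j) (r j) i.succ := by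
  cases q with
  | zero => exact i.elim0
  | succ q =>
    cases i using Fin.cases with
    | zero => rfl
    | succ i => rfl

lemma aFun_REw (x : Fin m → ZMod 2) (r : Fin m → Fin q → ZMod 2) (j : Fin m) (i : Fin q) :
    aFun (REw x r) j i = x j + r j i := by
  simp only [aFun, REw_eq_cons_add_cons]
  rw [sum_Iic_castSucc_add_succ (Fin.cons (α := fun _ => ZMod 2) (x j) (r j)) i, Fin.cons_zero,
    Fin.cons_succ]

lemma REw_bijective (x : Fin m → ZMod 2) : (REw (q := q) x).Bijective := by
  refine Finite.injective_iff_bijective.1 fun r r' h => ?_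
  ext1 j
  ext1 i
  apply add_left_cancel (a := x j)
  rw [← aFun_REw, ← aFun_REw, h]

end VerticalMask

section HorizontalMask

variable {m q : ℕ}

/-- The contribution `s_{i,j-1} ⊕ s_{i,j}` of the mask `s` to the register `z`. -/
def horizontalMask (s : Fin q → Fin (m - 1) → ZMod 2) : Fin q → Fin m → ZMod 2 :=
  fun i j => sBext m s i j + sBext m s i (j + 1)

/-- The row sums of a matrix, as a homomorphism; these are what the masking of `z` preserves. -/
def rowSum {ι κ A : Type*} [Fintype κ] [AddCommMonoid A] : (ι → κ → A) →+ (ι → A) where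
  toFun z i := ∑ j, z i j
  map_zero' := by ext; simp
  map_add' z z' := by ext; simp [sum_add_distrib]

lemma rowSum_apply {ι κ A : Type*} [Fintype κ] [AddCommMonoid A] (z : ι → κ → A) (i : ι) :
    rowSum z i = ∑ j, z i j :=
  rfl

lemma sBext_zero (s : Fin q → Fin (m - 1) → ZMod 2) (i : Fin q) : sBext m s i 0 = 0 := by
  simp [sBext]

lemma sBext_last (s : Fin q → Fin (m - 1) → ZMod 2) (i : Fin q) : sBext m s i m = 0 :=
  dif_neg (by lia)

lemma sBext_succ (s : Fin q → Fin (m - 1) → ZMod 2) (i : Fin q) (j : Fin (m - 1)) :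
    sBext m s i (j + 1) = s i j :=
  dif_pos (by lia)

lemma sum_Iic_horizontalMask (s : Fin q → Fin (m - 1) → ZMod 2) (i : Fin q) (j : Fin m) :
    ∑ k ∈ Iic j, horizontalMask s i k = sBext m s i (j + 1) := by
  simpa [horizontalMask, sBext_zero] using
    sum_Iic_castSucc_add_succ (fun k : Fin (m + 1) => sBext m s i k) j

lemma rowSum_horizontalMask (s : Fin q → Fin (m - 1) → ZMod 2) :
    rowSum (horizontalMask s) = 0 := by
  ext i
  simpa [rowSum_apply, horizontalMask, sBext_zero, sBext_last] using
    sum_castSucc_add_succ (fun k : Fin (m + 1) => sBext m s i k)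

lemma horizontalMask_injective : (horizontalMask (m := m) (q := q)).Injective := by
  intro s s' h
  ext1 i
  ext1 j
  have hj : (j : ℕ) < m := by lia
  rw [← sBext_succ s, ← sBext_succ s', ← sum_Iic_horizontalMask s i ⟨j, hj⟩,
    ← sum_Iic_horizontalMask s' i ⟨j, hj⟩, h]

lemma sBext_partialSum {z : Fin q → Fin m → ZMod 2} (hz : rowSum z = 0) (i : Fin q)
    (k : Fin (m + 1)) :
    sBext m (fun i j => Fin.partialSum (z i) ⟨j + 1, by lia⟩) i k = Fin.partialSum (z i) k := by
  by_cases hk : 1 ≤ (k : ℕ) ∧ (k : ℕ) ≤ m - 1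
  · rw [sBext, dif_pos hk]
    congr 1
    exact Fin.ext (Nat.sub_add_cancel hk.1)
  · rw [sBext, dif_neg hk]
    obtain rfl | rfl : k = 0 ∨ k = Fin.last m := by
      simp only [Fin.ext_iff, Fin.val_zero, Fin.val_last]
      lia
    · rw [Fin.partialSum_zero]
    · rw [partialSum_last, ← rowSum_apply, hz, Pi.zero_apply]

lemma exact_horizontalMask_rowSum :
    Function.Exact (horizontalMask (m := m) (q := q)) rowSum := by
  refine fun z => ⟨fun hz => ⟨fun i j => Fin.partialSum (z i) ⟨j + 1, by lia⟩, ?_⟩, ?_⟩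
  · ext1 i
    ext1 j
    have hleft := sBext_partialSum hz i j.castSucc
    have hright := sBext_partialSum hz i j.succ
    rw [Fin.val_castSucc] at hleft
    rw [Fin.val_succ] at hright
    rw [horizontalMask, hleft, hright, Fin.partialSum_succ, CharTwo.add_cancel_left]
  · rintro ⟨s, rfl⟩
    exact rowSum_horizontalMask s

end HorizontalMask

section RandomizedEncoding

variable {m q : ℕ}

/-- The matrix `M_{i,j} r_{j,i}`, with `r_{j,i} = x_j ⊕ a_{j,i}` expressed through the input and the
register `w`; it is the register `z` before horizontal masking. -/
def unmaskedZ (M : Fin q → Fin m → ZMod 2) (w : Fin m → Fin q → ZMod 2) (x : Fin m → ZMod 2) :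
    Fin q → Fin m → ZMod 2 :=
  fun i j => M i j * (x j + aFun w j i)

lemma REz_eq_horizontalMask_add (M : Fin q → Fin m → ZMod 2) (x : Fin m → ZMod 2)
    (r : Fin m → Fin q → ZMod 2) (s : Fin q → Fin (m - 1) → ZMod 2) :
    REz M r s = horizontalMask s + unmaskedZ M (REw x r) x := by
  ext1 i
  ext1 j
  simp only [REz, Pi.add_apply, horizontalMask, unmaskedZ, aFun_REw, CharTwo.add_cancel_left]

lemma rowSum_unmaskedZ (M : Fin q → Fin m → ZMod 2) (w : Fin m → Fin q → ZMod 2)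
    (x : Fin m → ZMod 2) :
    rowSum (unmaskedZ M w x) =
      (fun i => ∑ j, M i j * x j) + fun i => ∑ j, M i j * aFun w j i := by
  ext1 i
  simp only [rowSum_apply, unmaskedZ, mul_add, sum_add_distrib, Pi.add_apply]

lemma map_RE_eq_bind_uniformMask (M : Fin q → Fin m → ZMod 2) (μ : PMF (Fin m → ZMod 2)) :
    (pmfProd μ (pmfProd (PMF.uniformOfFintype (Fin m → Fin q → ZMod 2))
        (PMF.uniformOfFintype (Fin q → Fin (m - 1) → ZMod 2)))).map
      (fun xrs => (REw xrs.1 xrs.2.1, REz M xrs.2.1 xrs.2.2)) =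
    (PMF.uniformOfFintype (Fin m → Fin q → ZMod 2)).bind fun w =>
      (uniformMask horizontalMask (μ.map (unmaskedZ M w))).map (Prod.mk w) := by
  let maskedPair (w : Fin m → Fin q → ZMod 2) (x : Fin m → ZMod 2) :=
    (PMF.uniformOfFintype (Fin q → Fin (m - 1) → ZMod 2)).map fun s =>
      (w, horizontalMask s + unmaskedZ M w x)
  calc
    _ = μ.bind fun x => (PMF.uniformOfFintype _).bind fun r => maskedPair (REw x r) x := by
      simp only [map_pmfProd, maskedPair, ← REz_eq_horizontalMask_add]
    _ = μ.bind fun x => (PMF.uniformOfFintype _).bind fun w => maskedPair w x := by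
      congr! 2 with x
      conv_rhs => rw [← map_uniformOfFintype_of_bijective (REw_bijective x), PMF.bind_map]
      rfl
    _ = (PMF.uniformOfFintype _).bind fun w => μ.bind fun x => maskedPair w x :=
      PMF.bind_comm _ _ _
    _ = _ := by
      simp only [maskedPair, uniformMask, PMF.bind_map, PMF.map_bind, PMF.map_comp,
        Function.comp_def]

lemma shannonEntropy_map_rowSum_unmaskedZ (M : Fin q → Fin m → ZMod 2)
    (μ : PMF (Fin m → ZMod 2)) (w : Fin m → Fin q → ZMod 2) :
    shannonEntropy ((μ.map (unmaskedZ M w)).map rowSum) =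
      shannonEntropy (μ.map fun x => fun i : Fin q => ∑ j, M i j * x j) := by
  rw [← shannonEntropy_map_of_injective (add_left_injective fun i => ∑ j, M i j * aFun w j i)
    (μ.map _), PMF.map_comp, PMF.map_comp]
  simp only [Function.comp_def, rowSum_unmaskedZ]

end RandomizedEncoding

/-- Conditional entropy of the z-register given the
w-register: with `X, R, S` mutually independent (`R, S` uniform) and
`(W, Z) = RE_M(X; R, S)`, for every `w ∈ F_2^{mq}` one has
`H(Z | W = w) = q(m−1) + H(MX)`, where `H(Z | W = w)` is the Shannon entropy
of the conditional distribution of `Z` given the event `W = w`. -/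
theorem conditional_entropy_z_given_w {m q : ℕ} (hm : 1 ≤ m) (hq : 1 ≤ q)
    (M : Fin q → Fin m → ZMod 2) (μ : PMF (Fin m → ZMod 2))
    (γ : PMF ((Fin m → Fin q → ZMod 2) × (Fin q → Fin m → ZMod 2)))
    (hγ : γ = (pmfProd μ (pmfProd (PMF.uniformOfFintype (Fin m → Fin q → ZMod 2))
              (PMF.uniformOfFintype (Fin q → Fin (m - 1) → ZMod 2)))).map
          (fun xrs => (REw xrs.1 xrs.2.1, REz M xrs.2.1 xrs.2.2))) :
    ∀ w : Fin m → Fin q → ZMod 2,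
      shannonEntropyFun
          (fun z : Fin q → Fin m → ZMod 2 =>
            (γ (w, z) / ∑ z' : Fin q → Fin m → ZMod 2, γ (w, z')).toReal)
        = (q * (m - 1) : ℕ) +
            shannonEntropy (μ.map fun x => fun i : Fin q => ∑ j, M i j * x j) := by
  intro w
  have hw : PMF.uniformOfFintype (Fin m → Fin q → ZMod 2) w ≠ 0 :=
    (PMF.mem_support_iff _ _).1 (PMF.mem_support_uniformOfFintype w)
  have hcond (z : Fin q → Fin m → ZMod 2) : γ (w, z) / ∑ z', γ (w, z') =
      uniformMask horizontalMask (μ.map (unmaskedZ M w)) z := by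
    rw [hγ, map_RE_eq_bind_uniformMask]
    exact bind_map_prodMk_div_sum _ _ hw z
  simp only [hcond]
  calc
    _ = Real.logb 2 (Fintype.card (Fin q → Fin (m - 1) → ZMod 2)) +
          shannonEntropy ((μ.map (unmaskedZ M w)).map rowSum) :=
      shannonEntropy_uniformMask horizontalMask_injective exact_horizontalMask_rowSum _
    _ = _ := by rw [logb_card_matrix_zmod_two, shannonEntropy_map_rowSum_unmaskedZ]
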